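/- arXiv:1803.03030 — 2 statements merged into one kernel-verified Lean document; each statement's English description precedes it below -/
import Mathlib

section
/- Let x ∈ R^n with S = supp(Ωx), |S| = s, 1 ≤ s ≤ n−2, and let g ~ N(0, I_n). Then for every t ≥ 0, E[dist²(g, t·Ωᵀ∂‖·‖₁(Ωx))] ≤ n − (4t/√π)(n−1−s) + t²(4s − 2 + (8/3)(n−1−s) − 2/3). -/
open MeasureTheory ProbabilityTheory Real

attribute [local instance] Classical.propDecidable

/-!
The distance to `t Ωᵀ ∂‖·‖₁(u)`, `u = Ω x`, is bounded by the distance to one point `t Ωᵀ z` with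
`z` chosen depending on `g`: outside the support of `u`, where `zᵢ ∈ [-1, 1]` is free, take
`zᵢ = sign (gᵢ - gᵢ₊₁)`. Then
`‖g - t Ωᵀ z‖² = ‖g‖² - 2t ∑ zᵢ (gᵢ - gᵢ₊₁) + t² (2 ∑ zᵢ² - 2 ∑ zᵢ zᵢ₊₁)`.
In expectation each free index contributes `E|gᵢ - gᵢ₊₁|` to the linear term and each index of the
support contributes nothing. A consecutive pair satisfies `E[zᵢ zᵢ₊₁] ≥ -1` inside the support,
`E[zᵢ zᵢ₊₁] = 0` across its boundary, and `E[zᵢ zᵢ₊₁] ≥ -1/3` outside, by exchangeability of three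
coordinates. A nonempty set of `k` indices contains at most `k - 1` consecutive pairs.
For the Gaussian law `E g₁² = 1` and `E|g₁ - g₂| = 2/√π`.
-/

open Finset Matrix
open scoped NNReal

section Sign

lemma measurable_real_sign : Measurable Real.sign := by
  unfold Real.sign
  exact Measurable.ite measurableSet_Iio measurable_const
    (Measurable.ite measurableSet_Ioi measurable_const measurable_const)

lemma odd_real_sign : Function.Odd Real.sign := fun _ => Real.sign_neg

lemma abs_real_sign_le_one (r : ℝ) : |Real.sign r| ≤ 1 := by
  rcases Real.sign_apply_eq r with h | h | h <;> simp [h]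

lemma real_sign_mul_self (r : ℝ) : Real.sign r * r = |r| := by
  rcases lt_trichotomy r 0 with h | rfl | h
  · simp [Real.sign_of_neg h, abs_of_neg h]
  · simp
  · simp [Real.sign_of_pos h, abs_of_pos h]

lemma neg_one_le_real_sign_mul_cyclic (a b c : ℝ) :
    -1 ≤ Real.sign (a - b) * Real.sign (b - c) + Real.sign (b - c) * Real.sign (c - a)
      + Real.sign (c - a) * Real.sign (a - b) := by
  unfold Real.sign
  split_ifs <;> linarith

end Sign

section DifferenceMatrix

variable {R : Type*} [CommRing R] {m : ℕ}

/-- The one-dimensional difference operator `Ω`, with `(Ω g)ᵢ = gᵢ - gᵢ₊₁`. Its transpose acts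
as `z ↦ z ᵥ* Ω`. -/
def differenceMatrix (R : Type*) [CommRing R] (m : ℕ) : Matrix (Fin m) (Fin (m + 1)) R :=
  Matrix.of fun i l => (if l = i.castSucc then 1 else 0) - (if l = i.succ then 1 else 0)

lemma differenceMatrix_mulVec (g : Fin (m + 1) → R) :
    differenceMatrix R m *ᵥ g = fun i => g i.castSucc - g i.succ := by
  ext i
  simp [differenceMatrix, mulVec, dotProduct, sub_mul, sum_sub_distrib]

lemma vecMul_differenceMatrix (z : Fin m → R) :
    z ᵥ* differenceMatrix R m =
      Fin.snoc (α := fun _ => R) z 0 - Fin.cons (α := fun _ => R) 0 z := by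
  have sum_castSucc (l : Fin (m + 1)) :
      ∑ i, (if l = i.castSucc then z i else 0) = Fin.snoc (α := fun _ => R) z 0 l := by
    cases l using Fin.lastCases <;> simp [(Fin.castSucc_ne_last _).symm]
  have sum_succ (l : Fin (m + 1)) :
      ∑ i, (if l = i.succ then z i else 0) = Fin.cons (α := fun _ => R) 0 z l := by
    cases l using Fin.cases <;> simp [(Fin.succ_ne_zero _).symm]
  ext l
  simp [differenceMatrix, vecMul, dotProduct, mul_sub, sum_sub_distrib, sum_castSucc, sum_succ]

lemma dotProduct_self_vecMul_differenceMatrix (z : Fin (m + 1) → R) :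
    (z ᵥ* differenceMatrix R (m + 1)) ⬝ᵥ (z ᵥ* differenceMatrix R (m + 1)) =
      2 * ∑ i, z i ^ 2 - 2 * ∑ i : Fin m, z i.castSucc * z i.succ := by
  have snoc_self : ∑ l, Fin.snoc (α := fun _ => R) z 0 l ^ 2 = ∑ i, z i ^ 2 := by
    simp [Fin.sum_univ_castSucc (n := m + 1)]
  have cons_self : ∑ l, Fin.cons (α := fun _ => R) 0 z l ^ 2 = ∑ i, z i ^ 2 := by
    simp [Fin.sum_univ_succ (n := m + 1)]
  have snoc_cons : ∑ l, Fin.snoc (α := fun _ => R) z 0 l * Fin.cons (α := fun _ => R) 0 z l =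
      ∑ i : Fin m, z i.castSucc * z i.succ := by
    rw [Fin.sum_univ_castSucc, Fin.sum_univ_succ]
    simp only [Fin.snoc_castSucc]
    simp [mul_comm]
  calc (z ᵥ* differenceMatrix R (m + 1)) ⬝ᵥ (z ᵥ* differenceMatrix R (m + 1))
      = ∑ l, Fin.snoc (α := fun _ => R) z 0 l ^ 2 + ∑ l, Fin.cons (α := fun _ => R) 0 z l ^ 2
        - 2 * ∑ l, Fin.snoc (α := fun _ => R) z 0 l * Fin.cons (α := fun _ => R) 0 z l := by
        simp only [vecMul_differenceMatrix, dotProduct, Pi.sub_apply, mul_sum,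
          ← sum_add_distrib, ← sum_sub_distrib]
        exact sum_congr rfl fun _ _ => by ring
    _ = 2 * ∑ i, z i ^ 2 - 2 * ∑ i : Fin m, z i.castSucc * z i.succ := by
        rw [snoc_self, cons_self, snoc_cons, two_mul (∑ i, z i ^ 2)]

lemma sum_sub_vecMul_differenceMatrix_sq (g : Fin (m + 2) → R) (z : Fin (m + 1) → R) (t : R) :
    ∑ l, (g l - t * (z ᵥ* differenceMatrix R (m + 1)) l) ^ 2 =
      ∑ l, g l ^ 2 - 2 * t * ∑ i, z i * (g i.castSucc - g i.succ)
        + t ^ 2 * (2 * ∑ i, z i ^ 2 - 2 * ∑ i : Fin m, z i.castSucc * z i.succ) := by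
  have adjoint : ∑ i, z i * (g i.castSucc - g i.succ) =
      (z ᵥ* differenceMatrix R (m + 1)) ⬝ᵥ g := by
    rw [← dotProduct_mulVec, differenceMatrix_mulVec, dotProduct]
  rw [adjoint, ← dotProduct_self_vecMul_differenceMatrix]
  simp only [dotProduct, mul_sum, ← sum_sub_distrib, ← sum_add_distrib]
  exact sum_congr rfl fun _ _ => by ring

end DifferenceMatrix

lemma integrable_mul_of_abs_le_one {X : Type*} [MeasurableSpace X] {P : Measure X}
    [IsFiniteMeasure P] {f h : X → ℝ} (hf : Measurable f) (hh : Measurable h)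
    (hf_le : ∀ a, |f a| ≤ 1) (hh_le : ∀ a, |h a| ≤ 1) : Integrable (fun a => f a * h a) P :=
  (Integrable.of_bound hh.aestronglyMeasurable 1 (.of_forall hh_le)).bdd_mul
    hf.aestronglyMeasurable (.of_forall hf_le)

section ProductMeasure

variable {ι : Type*} [Fintype ι]

lemma integral_pi_comp_perm {X E : Type*} [MeasurableSpace X] [NormedAddCommGroup E]
    [NormedSpace ℝ E] (μ : Measure X) [SigmaFinite μ] (e : Equiv.Perm ι) (f : (ι → X) → E) :
    ∫ g, f (g ∘ e) ∂(Measure.pi fun _ : ι => μ) = ∫ g, f g ∂(Measure.pi fun _ : ι => μ) :=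
  (measurePreserving_arrowCongr' (fun _ => μ) (fun _ => μ) e.symm (MeasurableEquiv.refl X)
    (fun _ => .id μ)).integral_comp' f

lemma map_pi_eval_prodMk {X : Type*} [MeasurableSpace X] (μ : Measure X) [IsProbabilityMeasure μ]
    {i j : ι} (hij : i ≠ j) :
    (Measure.pi fun _ : ι => μ).map (fun g => (g i, g j)) = μ.prod μ := by
  have indep := (iIndepFun_pi (μ := fun _ : ι => μ) (X := fun _ => id)
    fun _ => aemeasurable_id).indepFun hij
  simpa [(measurePreserving_eval _ _).map_eq] using
    (indepFun_iff_map_prod_eq_prod_map_map (measurable_pi_apply i).aemeasurable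
      (measurable_pi_apply j).aemeasurable).1 indep

variable (μ : Measure ℝ)

lemma integral_pi_odd_sub_eq_zero [SigmaFinite μ] {φ : ℝ → ℝ} (hφ : Function.Odd φ) (i j : ι) :
    ∫ g, φ (g i - g j) ∂(Measure.pi fun _ : ι => μ) = 0 := by
  have swap := integral_pi_comp_perm μ (Equiv.swap i j) fun g => φ (g i - g j)
  have antisymm (g : ι → ℝ) : φ (g j - g i) = -φ (g i - g j) := by rw [← hφ, neg_sub]
  simp only [Function.comp_apply, Equiv.swap_apply_left, Equiv.swap_apply_right, antisymm,
    integral_neg] at swap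
  linarith

variable [IsProbabilityMeasure μ]

lemma integral_pi_abs_sub {i j : ι} (hij : i ≠ j) :
    ∫ g, |g i - g j| ∂(Measure.pi fun _ : ι => μ) = ∫ p, |p.1 - p.2| ∂(μ.prod μ) := by
  rw [← map_pi_eval_prodMk μ hij, integral_map (by fun_prop) (by fun_prop)]

lemma integrable_pi_sign_mul_sign (i j k l : ι) :
    Integrable (fun g : ι → ℝ => Real.sign (g i - g j) * Real.sign (g k - g l))
      (Measure.pi fun _ : ι => μ) :=
  integrable_mul_of_abs_le_one (measurable_real_sign.comp (by fun_prop))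
    (measurable_real_sign.comp (by fun_prop)) (fun _ => abs_real_sign_le_one _)
    fun _ => abs_real_sign_le_one _

/- The three cyclic shifts of the integrand have the same integral and add up to at least `-1`. -/
lemma neg_one_third_le_integral_pi_sign_mul_sign {i j k : ι} (hij : i ≠ j) (hjk : j ≠ k)
    (hik : i ≠ k) :
    -(1 / 3) ≤ ∫ g, Real.sign (g i - g j) * Real.sign (g j - g k)
      ∂(Measure.pi fun _ : ι => μ) := by
  let rot : Equiv.Perm ι := Equiv.swap i j * Equiv.swap j k
  have rot_i : rot i = j := by simp [rot, Equiv.swap_apply_of_ne_of_ne hij hik]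
  have rot_j : rot j = k := by simp [rot, Equiv.swap_apply_of_ne_of_ne hik.symm hjk.symm]
  have rot_k : rot k = i := by simp [rot]
  have shift := integral_pi_comp_perm μ rot fun g => Real.sign (g i - g j) * Real.sign (g j - g k)
  have shift' := integral_pi_comp_perm μ rot fun g =>
    Real.sign (g j - g k) * Real.sign (g k - g i)
  simp only [Function.comp_apply, rot_i, rot_j, rot_k] at shift shift'
  have int := integrable_pi_sign_mul_sign (ι := ι) μ
  have total := integral_mono (integrable_const (-1))
    (((int i j j k).add (int j k k i)).add (int k i i j))
    fun g => neg_one_le_real_sign_mul_cyclic (g i) (g j) (g k)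
  rw [integral_add' ((int i j j k).add (int j k k i)) (int k i i j),
    integral_add' (int i j j k) (int j k k i)] at total
  simp only [integral_const, probReal_univ, one_smul] at total
  linarith

end ProductMeasure

section GaussianMoments

lemma integral_sq_gaussianReal_zero (v : ℝ≥0) : ∫ a, a ^ 2 ∂(gaussianReal 0 v) = v := by
  have var := variance_id_gaussianReal (μ := 0) (v := v)
  rwa [variance_of_integral_eq_zero aemeasurable_id (by simp)] at var

lemma integral_abs_gaussianReal_zero (v : ℝ≥0) :
    ∫ a, |a| ∂(gaussianReal 0 v) = √(2 * v / π) := by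
  rcases eq_or_ne v 0 with rfl | hv
  · simp
  have half_line : ∫ a in Set.Ioi (0 : ℝ), a * rexp (-a ^ 2 / (2 * v)) = v := by
    calc ∫ a in Set.Ioi (0 : ℝ), a * rexp (-a ^ 2 / (2 * v))
        = ∫ a in Set.Ioi (0 : ℝ), a ^ (1 : ℝ) * rexp (-(1 / (2 * v)) * a ^ (2 : ℝ)) := by
          congr! 4 with a
          · rw [Real.rpow_one]
          · rw [Real.rpow_two]
            ring
      _ = v := by
          rw [integral_rpow_mul_exp_neg_mul_rpow (by norm_num) (by norm_num) (by positivity),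
            show (-(1 + 1) / 2 : ℝ) = -1 by norm_num, show ((1 + 1) / 2 : ℝ) = 1 by norm_num,
            Real.rpow_neg_one, Real.Gamma_one]
          field_simp
  rw [integral_gaussianReal_eq_integral_smul hv]
  simp only [gaussianPDFReal, smul_eq_mul, sub_zero]
  calc ∫ a, (√(2 * π * v))⁻¹ * rexp (-a ^ 2 / (2 * v)) * |a|
      = ∫ a, (√(2 * π * v))⁻¹ * (|a| * rexp (-|a| ^ 2 / (2 * v))) := by
        simp only [sq_abs, mul_assoc, mul_comm |_|]
    _ = 2 * ((√(2 * π * v))⁻¹ * v) := by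
        rw [integral_comp_abs (f := fun b => (√(2 * π * v))⁻¹ * (b * rexp (-b ^ 2 / (2 * v)))),
          integral_const_mul, half_line]
    _ = √(2 * v / π) := by
        rw [eq_comm, Real.sqrt_eq_iff_mul_self_eq (by positivity) (by positivity)]
        field_simp
        rw [Real.sq_sqrt (by positivity)]

lemma map_prod_sub_gaussianReal (m₁ m₂ : ℝ) (v₁ v₂ : ℝ≥0) :
    ((gaussianReal m₁ v₁).prod (gaussianReal m₂ v₂)).map (fun p => p.1 - p.2) =
      gaussianReal (m₁ - m₂) (v₁ + v₂) := by
  rw [sub_eq_add_neg, ← gaussianReal_conv_gaussianReal, ← gaussianReal_map_neg, Measure.conv]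
  nth_rw 2 [← Measure.map_id (μ := gaussianReal m₁ v₁)]
  rw [Measure.map_prod_map _ _ measurable_id measurable_neg,
    Measure.map_map (by fun_prop) (by fun_prop)]
  simp [Function.comp_def, sub_eq_add_neg]

lemma integral_prod_abs_sub_gaussianReal (m : ℝ) (v : ℝ≥0) :
    ∫ p, |p.1 - p.2| ∂((gaussianReal m v).prod (gaussianReal m v)) = 2 * √(v / π) := by
  rw [← integral_map (φ := fun p : ℝ × ℝ => p.1 - p.2) (f := fun a => |a|) (by fun_prop)
    (by fun_prop), map_prod_sub_gaussianReal, sub_self, integral_abs_gaussianReal_zero]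
  rw [show 2 * ((v + v : ℝ≥0) : ℝ) / π = 2 ^ 2 * (v / π) by push_cast; ring,
    Real.sqrt_mul (by norm_num), Real.sqrt_sq (by norm_num)]

end GaussianMoments

lemma card_consecutive_lt {m : ℕ} {p : Fin (m + 1) → Prop} [DecidablePred p] (hp : ∃ i, p i) :
    #{i : Fin m | p i.castSucc ∧ p i.succ} < #{i | p i} := by
  have nonempty : ({i | p i} : Finset (Fin (m + 1))).Nonempty :=
    hp.imp fun _ hi => (mem_filter_univ _).2 hi
  refine (card_le_card_of_injOn Fin.castSucc (t := erase _ (max' _ nonempty)) ?_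
    (Fin.castSucc_injective m).injOn).trans_lt (card_erase_lt_of_mem (max'_mem _ nonempty))
  intro i hi
  obtain ⟨hi_mem, hi_succ⟩ := (mem_filter.1 hi).2
  exact mem_erase.2 ⟨(i.castSucc_lt_succ.trans_le
    (le_max' _ _ ((mem_filter_univ _).2 hi_succ))).ne, (mem_filter_univ _).2 hi_mem⟩

section Subdifferential

/-- The subdifferential of the `ℓ¹` norm at `u`. -/
def l1Subdiff {ι : Type*} (u : ι → ℝ) : Set (ι → ℝ) :=
  {z | ∀ i, (u i ≠ 0 → z i = Real.sign (u i)) ∧ (u i = 0 → |z i| ≤ 1)}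

variable {m : ℕ}

/-- The squared Euclidean distance from `g` to `t Ωᵀ ∂‖·‖₁(u)`; for `u = Ω x` the latter set is
`t ∂‖·‖_TV(x)`. -/
noncomputable def sqDistTVSubdiff (u : Fin m → ℝ) (t : ℝ) (g : Fin (m + 1) → ℝ) : ℝ :=
  sInf {d | ∃ z ∈ l1Subdiff u, d = ∑ l, (g l - t * (z ᵥ* differenceMatrix ℝ m) l) ^ 2}

lemma sqDistTVSubdiff_nonneg (u : Fin m → ℝ) (t : ℝ) (g : Fin (m + 1) → ℝ) :
    0 ≤ sqDistTVSubdiff u t g := by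
  refine Real.sInf_nonneg ?_
  rintro _ ⟨z, -, rfl⟩
  positivity

lemma sqDistTVSubdiff_le {u z : Fin m → ℝ} (hz : z ∈ l1Subdiff u) (t : ℝ)
    (g : Fin (m + 1) → ℝ) :
    sqDistTVSubdiff u t g ≤ ∑ l, (g l - t * (z ᵥ* differenceMatrix ℝ m) l) ^ 2 := by
  refine csInf_le ⟨0, ?_⟩ ⟨z, hz, rfl⟩
  rintro _ ⟨w, -, rfl⟩
  positivity

/-- The element of `∂‖·‖₁(u)` which off the support of `u` takes the signs of `Ω g`, and so
maximises `⟨z, Ω g⟩` over `z ∈ ∂‖·‖₁(u)`. -/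
noncomputable def signSelection (u : Fin m → ℝ) (g : Fin (m + 1) → ℝ) (i : Fin m) : ℝ :=
  if u i = 0 then Real.sign (g i.castSucc - g i.succ) else Real.sign (u i)

variable (u : Fin m → ℝ)

lemma abs_signSelection_le_one (g : Fin (m + 1) → ℝ) (i : Fin m) : |signSelection u g i| ≤ 1 := by
  unfold signSelection
  split_ifs <;> exact abs_real_sign_le_one _

lemma signSelection_mem_l1Subdiff (g : Fin (m + 1) → ℝ) : signSelection u g ∈ l1Subdiff u :=
  fun i => ⟨fun hi => if_neg hi, fun _ => abs_signSelection_le_one u g i⟩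

lemma measurable_signSelection (i : Fin m) : Measurable fun g => signSelection u g i := by
  unfold signSelection
  split_ifs
  · exact measurable_real_sign.comp (by fun_prop)
  · exact measurable_const

end Subdifferential

section Expectation

variable {m : ℕ} (μ : Measure ℝ) [IsProbabilityMeasure μ]

lemma integrable_signSelection_mul_sub (hμ : Integrable id μ) (u : Fin m → ℝ) (i : Fin m) :
    Integrable (fun g => signSelection u g i * (g i.castSucc - g i.succ))
      (Measure.pi fun _ => μ) :=
  Integrable.bdd_mul (c := 1)
    ((integrable_comp_eval (i := i.castSucc) (f := id) hμ).sub
      (integrable_comp_eval (i := i.succ) (f := id) hμ))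
    (measurable_signSelection u i).aestronglyMeasurable
    (.of_forall fun g => abs_signSelection_le_one u g i)

lemma integral_signSelection_mul_sub (u : Fin m → ℝ) (i : Fin m) :
    ∫ g, signSelection u g i * (g i.castSucc - g i.succ) ∂(Measure.pi fun _ => μ) =
      if u i = 0 then ∫ p, |p.1 - p.2| ∂(μ.prod μ) else 0 := by
  by_cases hi : u i = 0
  · simp only [signSelection, hi, if_true, real_sign_mul_self]
    exact integral_pi_abs_sub μ i.castSucc_lt_succ.ne
  · have mean_zero := integral_pi_odd_sub_eq_zero μ (φ := id) (fun _ => rfl) i.castSucc i.succ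
    simp only [id_eq] at mean_zero
    simp only [signSelection, hi, if_false, integral_const_mul, mean_zero, mul_zero]

lemma sum_integral_signSelection_mul_sub (u : Fin m → ℝ) :
    ∑ i, ∫ g, signSelection u g i * (g i.castSucc - g i.succ) ∂(Measure.pi fun _ => μ) =
      (m - #{i | u i ≠ 0}) * ∫ p, |p.1 - p.2| ∂(μ.prod μ) := by
  have card_compl : (#{i | u i = 0} : ℝ) = m - #{i | u i ≠ 0} := by
    rw [eq_sub_iff_add_eq]
    exact_mod_cast (card_filter_add_card_filter_not (s := univ) (u · = 0)).trans (card_fin m)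
  simp only [integral_signSelection_mul_sub, ← sum_filter, sum_const, nsmul_eq_mul, card_compl]

lemma integrable_signSelection_mul_signSelection (u : Fin m → ℝ) (i j : Fin m) :
    Integrable (fun g => signSelection u g i * signSelection u g j) (Measure.pi fun _ => μ) :=
  integrable_mul_of_abs_le_one (measurable_signSelection u i) (measurable_signSelection u j)
    (abs_signSelection_le_one u · i) (abs_signSelection_le_one u · j)

variable (u : Fin (m + 1) → ℝ)

lemma le_integral_signSelection_castSucc_mul_succ (i : Fin m) :
    -(if u i.castSucc ≠ 0 ∧ u i.succ ≠ 0 then 1 else 0)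
        - 1 / 3 * (if u i.castSucc = 0 ∧ u i.succ = 0 then 1 else 0) ≤
      ∫ g, signSelection u g i.castSucc * signSelection u g i.succ
        ∂(Measure.pi fun _ => μ) := by
  by_cases hi : u i.castSucc = 0 <;> by_cases hi' : u i.succ = 0 <;>
    simp only [signSelection, hi, hi', if_true, if_false, ne_eq, not_true, not_false_eq_true,
      and_self, and_true, and_false, integral_const_mul, integral_mul_const,
      integral_pi_odd_sub_eq_zero μ odd_real_sign, mul_zero, zero_mul, neg_zero, sub_zero, le_refl]
  · rw [← Fin.succ_castSucc]
    have := neg_one_third_le_integral_pi_sign_mul_sign μ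
      (i := i.castSucc.castSucc) (j := i.castSucc.succ) (k := i.succ.succ)
      (by simp [Fin.ext_iff]) (by simp [Fin.ext_iff]) (by simp [Fin.ext_iff]; omega)
    linarith
  · rw [integral_const, probReal_univ, one_smul]
    refine (abs_le.1 ?_).1
    rw [abs_mul]
    exact mul_le_one₀ (abs_real_sign_le_one _) (abs_nonneg _) (abs_real_sign_le_one _)

lemma le_sum_integral_signSelection_castSucc_mul_succ (h_supp : ∃ i, u i ≠ 0)
    (h_zero : ∃ i, u i = 0) :
    1 - #{i | u i ≠ 0} - 1 / 3 * ((m : ℝ) - #{i | u i ≠ 0}) ≤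
      ∑ i : Fin m, ∫ g, signSelection u g i.castSucc * signSelection u g i.succ
        ∂(Measure.pi fun _ => μ) := by
  have supp_pairs : (#{i : Fin m | u i.castSucc ≠ 0 ∧ u i.succ ≠ 0} : ℝ) + 1 ≤
      #{i | u i ≠ 0} := by exact_mod_cast card_consecutive_lt h_supp
  have zero_pairs : (#{i : Fin m | u i.castSucc = 0 ∧ u i.succ = 0} : ℝ) + 1 ≤
      #{i | u i = 0} := by exact_mod_cast card_consecutive_lt h_zero
  have card_add : (#{i | u i = 0} : ℝ) + #{i | u i ≠ 0} = m + 1 := by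
    exact_mod_cast (card_filter_add_card_filter_not (s := univ) (u · = 0)).trans (card_fin _)
  have termwise := sum_le_sum fun i (_ : i ∈ univ) =>
    le_integral_signSelection_castSucc_mul_succ μ u i
  rw [sum_sub_distrib, sum_neg_distrib, ← mul_sum, sum_boole, sum_boole] at termwise
  linarith

lemma sqDistTVSubdiff_le_signSelection (t : ℝ) (g : Fin (m + 2) → ℝ) :
    sqDistTVSubdiff u t g ≤
      ∑ l, g l ^ 2 - 2 * t * ∑ i, signSelection u g i * (g i.castSucc - g i.succ)
        + t ^ 2 * (2 * (m + 1)
          - 2 * ∑ i : Fin m, signSelection u g i.castSucc * signSelection u g i.succ) := by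
  have sum_sq_le : ∑ i, signSelection u g i ^ 2 ≤ (m : ℝ) + 1 := by
    simpa using sum_le_sum fun i (_ : i ∈ univ) =>
      (sq_le_one_iff_abs_le_one _).2 (abs_signSelection_le_one u g i)
  refine (sqDistTVSubdiff_le (signSelection_mem_l1Subdiff u g) t g).trans ?_
  rw [sum_sub_vecMul_differenceMatrix_sq]
  gcongr

lemma integral_sqDistTVSubdiff_le_sum_integral (hμ : MemLp id 2 μ) (t : ℝ) :
    ∫ g, sqDistTVSubdiff u t g ∂(Measure.pi fun _ => μ) ≤
      (m + 2) * ∫ a, a ^ 2 ∂μ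
        - 2 * t * ∑ i, ∫ g, signSelection u g i * (g i.castSucc - g i.succ)
          ∂(Measure.pi fun _ => μ)
        + t ^ 2 * (2 * (m + 1) - 2 * ∑ i : Fin m,
          ∫ g, signSelection u g i.castSucc * signSelection u g i.succ
            ∂(Measure.pi fun _ => μ)) := by
  have sq_int (l : Fin (m + 2)) : Integrable (fun g => g l ^ 2) (Measure.pi fun _ => μ) :=
    integrable_comp_eval (f := fun a => a ^ 2) hμ.integrable_sq
  have lin_int := integrable_signSelection_mul_sub μ (hμ.integrable one_le_two) u
  have quad_int (i : Fin m) := integrable_signSelection_mul_signSelection μ u i.castSucc i.succ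
  have sum_sq_int := integrable_finsetSum univ fun l _ => sq_int l
  have sum_lin_int := (integrable_finsetSum univ fun i _ => lin_int i).const_mul (2 * t)
  have sum_quad_int := (integrable_finsetSum univ fun i _ => quad_int i).const_mul 2
  have const_int : Integrable (fun _ => 2 * ((m : ℝ) + 1)) (Measure.pi fun _ : Fin (m + 2) => μ) :=
    integrable_const _
  refine (integral_mono_of_nonneg (.of_forall (sqDistTVSubdiff_nonneg u t))
    ((sum_sq_int.sub sum_lin_int).add ((const_int.sub sum_quad_int).const_mul (t ^ 2)))
    (.of_forall (sqDistTVSubdiff_le_signSelection u t))).trans_eq ?_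
  rw [integral_add' (sum_sq_int.sub sum_lin_int) ((const_int.sub sum_quad_int).const_mul _),
    integral_sub' sum_sq_int sum_lin_int, integral_const_mul, integral_const_mul,
    integral_sub' const_int sum_quad_int, integral_const, integral_const_mul,
    integral_finsetSum _ fun l _ => sq_int l, integral_finsetSum _ fun i _ => lin_int i,
    integral_finsetSum _ fun i _ => quad_int i]
  have sq_eval (l : Fin (m + 2)) :
      ∫ g, g l ^ 2 ∂(Measure.pi fun _ : Fin (m + 2) => μ) = ∫ a, a ^ 2 ∂μ :=
    integral_comp_eval (f := fun a => a ^ 2) (by fun_prop)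
  simp [sq_eval]

theorem integral_sqDistTVSubdiff_le (hμ : MemLp id 2 μ) (t : ℝ) (h_supp : ∃ i, u i ≠ 0)
    (h_zero : ∃ i, u i = 0) :
    ∫ g, sqDistTVSubdiff u t g ∂(Measure.pi fun _ => μ) ≤
      (m + 2) * ∫ a, a ^ 2 ∂μ
        - 2 * t * ((m + 1 - #{i | u i ≠ 0}) * ∫ p, |p.1 - p.2| ∂(μ.prod μ))
        + t ^ 2 * (4 * #{i | u i ≠ 0} - 2 + 8 / 3 * (m + 1 - #{i | u i ≠ 0}) - 2 / 3) := by
  refine (integral_sqDistTVSubdiff_le_sum_integral μ u hμ t).trans ?_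
  rw [sum_integral_signSelection_mul_sub, Nat.cast_add_one]
  gcongr _ + t ^ 2 * ?_
  linarith [le_sum_integral_signSelection_castSucc_mul_succ μ u h_supp h_zero]

end Expectation

section NatIndexed

variable {m : ℕ}

lemma mem_l1Subdiff_comp_val {u z : ℕ → ℝ} :
    z ∘ Fin.val ∈ l1Subdiff (u ∘ Fin.val : Fin m → ℝ) ↔
      ∀ i < m, (u i ≠ 0 → z i = Real.sign (u i)) ∧ (u i = 0 → |z i| ≤ 1) :=
  Fin.forall_iff

lemma vecMul_differenceMatrix_comp_val {ω : ℕ → ℕ → ℝ}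
    (hω : ∀ i l, ω i l = if l = i then 1 else if l = i + 1 then -1 else 0) (z : ℕ → ℝ)
    (l : Fin (m + 1)) :
    ((z ∘ Fin.val) ᵥ* differenceMatrix ℝ m) l = ∑ i ∈ range m, z i * ω i l := by
  rw [sum_range, vecMul, dotProduct]
  refine sum_congr rfl fun i _ => ?_
  simp only [Function.comp_apply, differenceMatrix, of_apply, hω, Fin.ext_iff, Fin.val_castSucc,
    Fin.val_succ]
  split_ifs <;> first | omega | norm_num

lemma card_filter_range_eq_card_univ_fin (p : ℕ → Prop) [DecidablePred p] :
    #{i ∈ range m | p i} = #{i : Fin m | p i} := by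
  simp only [card_filter, sum_range]

end NatIndexed

theorem stmt12_general (μ : Measure ℝ) [IsProbabilityMeasure μ] (hμ : MemLp id 2 μ) (n s : ℕ)
    (x : ℕ → ℝ) (t : ℝ) (ω : ℕ → ℕ → ℝ)
    (hω : ∀ i l, ω i l = if l = i then 1 else if l = i + 1 then -1 else 0)
    (hcard : #{i ∈ range (n - 1) | x i - x (i + 1) ≠ 0} = s) (hs1 : 1 ≤ s) (hs2 : s ≤ n - 2) :
    (∫ g : Fin n → ℝ,
        sInf {d : ℝ | ∃ z : ℕ → ℝ,
          (∀ i < n - 1,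
            (x i - x (i + 1) ≠ 0 → z i = Real.sign (x i - x (i + 1))) ∧
            (x i - x (i + 1) = 0 → |z i| ≤ 1)) ∧
          d = ∑ l : Fin n, (g l - t * ∑ i ∈ range (n - 1), z i * ω i (l : ℕ)) ^ 2}
        ∂(Measure.pi fun _ => μ))
      ≤ n * ∫ a, a ^ 2 ∂μ
          - 2 * t * (((n : ℝ) - 1 - s) * ∫ p, |p.1 - p.2| ∂(μ.prod μ))
          + t ^ 2 * (4 * (s : ℝ) - 2 + (8 / 3) * ((n : ℝ) - 1 - s) - 2 / 3) := by
  obtain ⟨m, rfl⟩ : ∃ m, n = m + 2 := ⟨n - 2, by omega⟩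
  let u : ℕ → ℝ := fun i => x i - x (i + 1)
  have card_supp : #{i : Fin (m + 1) | (u ∘ Fin.val) i ≠ 0} = s :=
    (card_filter_range_eq_card_univ_fin _).symm.trans hcard
  have h_supp : ∃ i : Fin (m + 1), (u ∘ Fin.val) i ≠ 0 := by
    obtain ⟨i, hi⟩ := card_pos.1 (card_supp ▸ hs1)
    exact ⟨i, (mem_filter.1 hi).2⟩
  have h_zero : ∃ i : Fin (m + 1), (u ∘ Fin.val) i = 0 := by
    by_contra! all_ne
    rw [filter_true_of_mem fun i _ => all_ne i, card_fin] at card_supp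
    omega
  have bound := integral_sqDistTVSubdiff_le μ (u ∘ Fin.val) hμ t h_supp h_zero
  have restrict_surj := Fin.val_injective (n := m + 1).surjective_comp_right (γ := ℝ)
  simp only [sqDistTVSubdiff, restrict_surj.exists, mem_l1Subdiff_comp_val,
    vecMul_differenceMatrix_comp_val hω, card_supp] at bound
  exact bound.trans_eq (by push_cast; ring)

/-- For `x ∈ ℝⁿ` with gradient support of size `s`, `1 ≤ s ≤ n-2`, standard Gaussian
`g` and `t ≥ 0`, `E[dist²(g, t Ωᵀ ∂‖·‖₁(Ωx))] ≤ n - (4t/√π)(n-1-s) + t²(4s-2+(8/3)(n-1-s)-2/3)`.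
The squared distance is the infimum of `‖g - t Ωᵀ z‖₂²` over `z` in the ℓ¹ subdifferential
of `‖·‖₁` at `Ωx`, where `(Ωw)_i = w_i - w_{i+1}` and `Ωᵀz = Σ_i z_i ω_i`. -/
theorem stmt12 (n s : ℕ) (hn : 3 ≤ n) (x : ℕ → ℝ) (t : ℝ) (ht : 0 ≤ t)
    (ω : ℕ → ℕ → ℝ)
    (hω : ∀ i l, ω i l = if l = i then 1 else if l = i + 1 then -1 else 0)
    (hcard : ((Finset.range (n - 1)).filter (fun i => x i - x (i + 1) ≠ 0)).card = s)
    (hs1 : 1 ≤ s) (hs2 : s ≤ n - 2) :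
    (∫ g : Fin n → ℝ,
        sInf {d : ℝ | ∃ z : ℕ → ℝ,
          (∀ i < n - 1,
            (x i - x (i + 1) ≠ 0 → z i = Real.sign (x i - x (i + 1))) ∧
            (x i - x (i + 1) = 0 → |z i| ≤ 1)) ∧
          d = ∑ l : Fin n,
            (g l - t * ∑ i ∈ Finset.range (n - 1), z i * ω i (l : ℕ)) ^ 2}
        ∂(Measure.pi fun _ => gaussianReal 0 1))
      ≤ (n : ℝ) - (4 * t / Real.sqrt π) * ((n : ℝ) - 1 - s)
          + t ^ 2 * (4 * (s : ℝ) - 2 + (8 / 3) * ((n : ℝ) - 1 - s) - 2 / 3) := by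
  have h := stmt12_general (gaussianReal 0 1) (memLp_id_gaussianReal 2) n s x t ω hω hcard hs1 hs2
  rw [integral_sq_gaussianReal_zero, integral_prod_abs_sub_gaussianReal] at h
  exact h.trans_eq (by simp only [NNReal.coe_one, one_div, Real.sqrt_inv]; ring)
end

section
/- Let x ∈ R^n with S = supp(Ωx), |S| = s, 1 ≤ s ≤ n−2, and g ~ N(0, I_n). Then inf_{t ≥ 0} E[dist²(g, t·∂‖·‖_TV(x))] ≤ n − 3(n−1−s)² / (π(2n + s − 4)). -/
open MeasureTheory ProbabilityTheory Real

attribute [local instance] Classical.propDecidable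

/-!
Bound the distance from `g` to `t ∂‖·‖_TV(x)` by the distance to the single point `t Ωᵀz`, where `z`
is the sign of `Ωx` on its support and the sign of `Ωg` off it. Since `|z i| ≤ 1`, this squared
distance is at most `‖g‖² - 2t ∑ zᵢ (gᵢ - gᵢ₊₁) + t² (2(n-1) - 2 ∑ zᵢ zᵢ₊₁)`. In expectation, the
linear term picks up `E|g₀ - g₁|` for each index off the support. In the quadratic term, the mixed
products average to zero, the products on the support are at least `-1`, and those off the support
average at least `-1/3`: the three signs of cyclic differences of `a, b, c` have pairwise products
summing to at least `-1`, and these products are equidistributed by exchangeability. Summing over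
neighbours and minimising the resulting quadratic in `t` gives the bound. Only the second moment and
the mean absolute difference of the i.i.d. coordinates enter.
-/

open scoped NNReal

namespace DiscreteTV

section RealSign

lemma measurable_realSign : Measurable Real.sign := by
  unfold Real.sign
  exact Measurable.ite measurableSet_Iio measurable_const
    (Measurable.ite measurableSet_Ioi measurable_const measurable_const)

lemma measurable_realSign_eval_sub_eval {ι : Type*} (i j : ι) :
    Measurable fun g : ι → ℝ ↦ Real.sign (g i - g j) :=
  measurable_realSign.comp (by fun_prop)

lemma abs_realSign_le_one (r : ℝ) : |Real.sign r| ≤ 1 := by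
  rcases Real.sign_apply_eq r with h | h | h <;> simp [h]

lemma realSign_mul_self (r : ℝ) : Real.sign r * r = |r| := by
  rcases lt_trichotomy r 0 with h | rfl | h
  · simp [Real.sign_of_neg h, abs_of_neg h]
  · simp
  · simp [Real.sign_of_pos h, abs_of_pos h]

lemma neg_one_le_sum_realSign_cyclic (a b c : ℝ) :
    -1 ≤ Real.sign (a - b) * Real.sign (b - c) + Real.sign (b - c) * Real.sign (c - a)
      + Real.sign (c - a) * Real.sign (a - b) := by
  simp only [Real.sign, sub_neg, sub_pos]
  split_ifs <;> first | (exfalso; linarith) | norm_num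

lemma abs_mul_le_one {a b : ℝ} (ha : |a| ≤ 1) (hb : |b| ≤ 1) : |a * b| ≤ 1 := by
  rw [abs_mul]
  exact mul_le_one₀ ha (abs_nonneg _) hb

end RealSign

section Variation

lemma dist_le_sum_range_dist {α : Type*} [PseudoMetricSpace α] (f : ℕ → α) {i j k : ℕ}
    (hi : i ≤ k) (hj : j ≤ k) :
    dist (f i) (f j) ≤ ∑ l ∈ Finset.range k, dist (f l) (f (l + 1)) := by
  wlog hij : i ≤ j generalizing i j
  · rw [dist_comm]
    exact this hj hi (le_of_not_ge hij)
  refine (dist_le_Ico_sum_dist f hij).trans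
    (Finset.sum_le_sum_of_subset_of_nonneg (fun l hl ↦ ?_) fun _ _ _ ↦ dist_nonneg)
  exact Finset.mem_range.2 ((Finset.mem_Ico.1 hl).2.trans_le hj)

lemma dist_add_dist_le_sum_range_dist {α : Type*} [PseudoMetricSpace α] (f : ℕ → α) {i k : ℕ}
    (hi : i ≤ k) :
    dist (f 0) (f i) + dist (f i) (f k) ≤ ∑ l ∈ Finset.range k, dist (f l) (f (l + 1)) := by
  rw [Finset.range_eq_Ico, ← Finset.sum_Ico_consecutive _ (Nat.zero_le i) hi]
  exact add_le_add (dist_le_Ico_sum_dist f (Nat.zero_le i)) (dist_le_Ico_sum_dist f hi)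

lemma sum_one_add_add_sub_variation_le (p : ℕ → ℝ) {i j k : ℕ} (hi : i ≤ k) (hj : j ≤ k)
    (hpi : p i = 1) (hpj : p j = 0) :
    ∑ l ∈ Finset.range k, (1 + p l + p (l + 1) - 2 * dist (p l) (p (l + 1)))
      ≤ k + 2 * ∑ l ∈ Finset.range (k + 1), p l - 3 := by
  set V := ∑ l ∈ Finset.range k, dist (p l) (p (l + 1)) with hV
  have one_le_variation : 1 ≤ V := by
    simpa [hpi, hpj] using dist_le_sum_range_dist p hi hj
  have two_sub_endpoints_le_variation : (1 - p 0) + (1 - p k) ≤ V := by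
    refine le_trans (add_le_add ?_ ?_) (dist_add_dist_le_sum_range_dist p hi)
    · rw [hpi, dist_comm]; exact le_abs_self _
    · rw [hpi]; exact le_abs_self _
  have drop_last := Finset.sum_range_succ p k
  have drop_first := Finset.sum_range_succ' p k
  rw [Finset.sum_sub_distrib, ← Finset.mul_sum, ← hV, Finset.sum_add_distrib,
    Finset.sum_add_distrib]
  simp only [Finset.sum_const, Finset.card_range, nsmul_eq_mul, mul_one]
  linarith

end Variation

section DifferenceMatrix

/-- The matrix `Ω` of the one-dimensional difference operator, `(Ωx) i = x i - x (i + 1)`, with rows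
and columns indexed by all of `ℕ`; the operator on `ℝ^(m+1)` uses the rows `i < m`. -/
def diffMatrix (i l : ℕ) : ℝ := if l = i then 1 else if l = i + 1 then -1 else 0

lemma diffMatrix_eq (i l : ℕ) :
    diffMatrix i l = (if l = i then 1 else 0) - if l = i + 1 then 1 else 0 := by
  unfold diffMatrix
  split_ifs <;> first | omega | norm_num

lemma sum_mul_diffMatrix (G : ℕ → ℝ) {i m : ℕ} (hi : i < m) :
    ∑ l ∈ Finset.range (m + 1), G l * diffMatrix i l = G i - G (i + 1) := by
  simp [diffMatrix_eq, mul_sub, Finset.sum_sub_distrib, hi, hi.trans m.lt_succ_self]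

lemma sum_diffMatrix_zero (z : ℕ → ℝ) (m : ℕ) :
    ∑ i ∈ Finset.range (m + 1), z i * diffMatrix i 0 = z 0 := by
  simp [diffMatrix_eq]

lemma sum_diffMatrix_succ (z : ℕ → ℝ) (m j : ℕ) :
    ∑ i ∈ Finset.range m, z i * diffMatrix i (j + 1)
      = (if j + 1 < m then z (j + 1) else 0) - if j < m then z j else 0 := by
  simp [diffMatrix_eq, mul_sub, Finset.sum_sub_distrib]

lemma sum_mul_sum_diffMatrix (z G : ℕ → ℝ) (m : ℕ) :
    ∑ l ∈ Finset.range (m + 1), G l * ∑ i ∈ Finset.range m, z i * diffMatrix i l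
      = ∑ i ∈ Finset.range m, z i * (G i - G (i + 1)) := by
  simp_rw [Finset.mul_sum, mul_left_comm (G _)]
  rw [Finset.sum_comm]
  refine Finset.sum_congr rfl fun i hi ↦ ?_
  rw [← Finset.mul_sum, sum_mul_diffMatrix G (Finset.mem_range.1 hi)]

lemma sum_sq_sum_diffMatrix (z : ℕ → ℝ) (k : ℕ) :
    ∑ l ∈ Finset.range (k + 2), (∑ i ∈ Finset.range (k + 1), z i * diffMatrix i l) ^ 2
      = z 0 ^ 2 + ∑ j ∈ Finset.range k, (z (j + 1) - z j) ^ 2 + z k ^ 2 := by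
  rw [Finset.sum_range_succ', Finset.sum_range_succ, sum_diffMatrix_zero]
  have interior : ∀ j ∈ Finset.range k,
      (∑ i ∈ Finset.range (k + 1), z i * diffMatrix i (j + 1)) ^ 2 = (z (j + 1) - z j) ^ 2 := by
    intro j hj
    have hj := Finset.mem_range.1 hj
    rw [sum_diffMatrix_succ, if_pos (by omega), if_pos (by omega)]
  rw [Finset.sum_congr rfl interior, sum_diffMatrix_succ, if_neg (by omega), if_pos (by omega)]
  ring

lemma sum_sq_sum_diffMatrix_le {z : ℕ → ℝ} (hz : ∀ i, |z i| ≤ 1) (k : ℕ) :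
    ∑ l ∈ Finset.range (k + 2), (∑ i ∈ Finset.range (k + 1), z i * diffMatrix i l) ^ 2
      ≤ 2 * (k + 1) - 2 * ∑ i ∈ Finset.range k, z i * z (i + 1) := by
  have sq_le (i : ℕ) : z i ^ 2 ≤ 1 := (sq_le_one_iff_abs_le_one _).2 (hz i)
  have increments : ∑ j ∈ Finset.range k, (z (j + 1) - z j) ^ 2
      ≤ ∑ j ∈ Finset.range k, (2 - 2 * (z j * z (j + 1))) :=
    Finset.sum_le_sum fun j _ ↦ by linarith [sq_le j, sq_le (j + 1)]
  rw [Finset.sum_sub_distrib, ← Finset.mul_sum, Finset.sum_const, Finset.card_range,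
    nsmul_eq_mul] at increments
  rw [sum_sq_sum_diffMatrix]
  linarith [sq_le 0, sq_le k]

/-- The bound `‖G‖² - 2t ⟨z, ΩG⟩ + t² (2(k+1) - 2 ∑ zᵢ zᵢ₊₁)` on `‖G - t Ωᵀz‖²` in `ℝ^(k+2)` for
dual vectors `z` with entries in `[-1, 1]`. -/
def sqDistBound (k : ℕ) (t : ℝ) (z G : ℕ → ℝ) : ℝ :=
  ∑ l ∈ Finset.range (k + 2), G l ^ 2
    - 2 * t * ∑ i ∈ Finset.range (k + 1), z i * (G i - G (i + 1))
    + t ^ 2 * (2 * (k + 1) - 2 * ∑ i ∈ Finset.range k, z i * z (i + 1))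

lemma sum_sq_sub_le_sqDistBound {z : ℕ → ℝ} (hz : ∀ i, |z i| ≤ 1) (k : ℕ) (t : ℝ) (G : ℕ → ℝ) :
    ∑ l ∈ Finset.range (k + 2),
        (G l - t * ∑ i ∈ Finset.range (k + 1), z i * diffMatrix i l) ^ 2
      ≤ sqDistBound k t z G := by
  calc ∑ l ∈ Finset.range (k + 2),
        (G l - t * ∑ i ∈ Finset.range (k + 1), z i * diffMatrix i l) ^ 2
      = ∑ l ∈ Finset.range (k + 2), G l ^ 2
          - 2 * t * ∑ l ∈ Finset.range (k + 2),
              G l * ∑ i ∈ Finset.range (k + 1), z i * diffMatrix i l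
          + t ^ 2 * ∑ l ∈ Finset.range (k + 2),
              (∑ i ∈ Finset.range (k + 1), z i * diffMatrix i l) ^ 2 := by
        rw [Finset.mul_sum, Finset.mul_sum, ← Finset.sum_sub_distrib, ← Finset.sum_add_distrib]
        exact Finset.sum_congr rfl fun l _ ↦ by ring
    _ ≤ sqDistBound k t z G := by
        rw [sum_mul_sum_diffMatrix]
        exact add_le_add_right
          (mul_le_mul_of_nonneg_left (sum_sq_sum_diffMatrix_le hz k) (sq_nonneg t)) _

end DifferenceMatrix

section Subdifferential

/-- `z` represents an element of `∂‖·‖₁(Ωx)`, where `Ω` has `m` rows; the values `z i` with `m ≤ i`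
are irrelevant. -/
def IsDualVector (m : ℕ) (x z : ℕ → ℝ) : Prop :=
  ∀ i < m, (x i - x (i + 1) ≠ 0 → z i = Real.sign (x i - x (i + 1))) ∧
    (x i - x (i + 1) = 0 → |z i| ≤ 1)

/-- The squared Euclidean distance from `g` to `t ∂‖·‖_TV(x)`, where
`∂‖·‖_TV(x) = Ωᵀ ∂‖·‖₁(Ωx)`. -/
noncomputable def sqDistSubdiff (n : ℕ) (x : ℕ → ℝ) (t : ℝ) (g : Fin n → ℝ) : ℝ :=
  sInf {d : ℝ | ∃ z : ℕ → ℝ, IsDualVector (n - 1) x z ∧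
    d = ∑ l : Fin n, (g l - t * ∑ i ∈ Finset.range (n - 1), z i * diffMatrix i (l : ℕ)) ^ 2}

lemma sqDistSubdiff_nonneg (n : ℕ) (x : ℕ → ℝ) (t : ℝ) (g : Fin n → ℝ) :
    0 ≤ sqDistSubdiff n x t g := by
  refine Real.sInf_nonneg ?_
  rintro d ⟨z, -, rfl⟩
  exact Finset.sum_nonneg fun l _ ↦ sq_nonneg _

lemma sqDistSubdiff_le {n : ℕ} {x z : ℕ → ℝ} (hz : IsDualVector (n - 1) x z) (t : ℝ)
    (g : Fin n → ℝ) :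
    sqDistSubdiff n x t g
      ≤ ∑ l : Fin n, (g l - t * ∑ i ∈ Finset.range (n - 1), z i * diffMatrix i (l : ℕ)) ^ 2 := by
  refine csInf_le ⟨0, ?_⟩ ⟨z, hz, rfl⟩
  rintro d ⟨z, -, rfl⟩
  exact Finset.sum_nonneg fun l _ ↦ sq_nonneg _

/-- The indicator of the support of `Ωx`. -/
noncomputable def jump (x : ℕ → ℝ) (i : ℕ) : ℝ := if x i - x (i + 1) ≠ 0 then 1 else 0

lemma sum_jump (x : ℕ → ℝ) (m : ℕ) :
    ∑ i ∈ Finset.range m, jump x i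
      = ((Finset.range m).filter fun i ↦ x i - x (i + 1) ≠ 0).card := by
  simp only [jump, Finset.sum_boole]

lemma exists_jump_eq_one_and_eq_zero {x : ℕ → ℝ} {k s : ℕ}
    (hcard : ((Finset.range (k + 1)).filter fun i ↦ x i - x (i + 1) ≠ 0).card = s)
    (hs : 1 ≤ s) (hsk : s ≤ k) :
    (∃ i ≤ k, jump x i = 1) ∧ ∃ j ≤ k, jump x j = 0 := by
  constructor
  · obtain ⟨i, hi⟩ := Finset.card_pos.1 (hs.trans_eq hcard.symm)
    obtain ⟨hik, hxi⟩ := Finset.mem_filter.1 hi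
    exact ⟨i, Nat.lt_succ_iff.1 (Finset.mem_range.1 hik), if_pos hxi⟩
  · obtain ⟨j, hjk, hxj⟩ := Finset.exists_mem_notMem_of_card_lt_card
      (s := (Finset.range (k + 1)).filter fun i ↦ x i - x (i + 1) ≠ 0) (t := Finset.range (k + 1))
      (by rw [hcard, Finset.card_range]; omega)
    exact ⟨j, Nat.lt_succ_iff.1 (Finset.mem_range.1 hjk),
      if_neg fun h ↦ hxj (Finset.mem_filter.2 ⟨hjk, h⟩)⟩

/-- The element of `∂‖·‖₁(Ωx)` that maximises the pairing with `ΩG`: off the support of `Ωx`, where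
the entries are free in `[-1, 1]`, it is aligned with the sign of `ΩG`. -/
noncomputable def alignedDual (x G : ℕ → ℝ) (i : ℕ) : ℝ :=
  if x i - x (i + 1) ≠ 0 then Real.sign (x i - x (i + 1)) else Real.sign (G i - G (i + 1))

lemma abs_alignedDual_le_one (x G : ℕ → ℝ) (i : ℕ) : |alignedDual x G i| ≤ 1 := by
  unfold alignedDual
  split_ifs <;> exact abs_realSign_le_one _

lemma measurable_alignedDual {ι : Type*} (x : ℕ → ℝ) (c : ℕ → ι) (i : ℕ) :
    Measurable fun g : ι → ℝ ↦ alignedDual x (g ∘ c) i := by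
  unfold alignedDual
  split_ifs
  · exact measurable_const
  · exact measurable_realSign_eval_sub_eval _ _

lemma isDualVector_alignedDual (m : ℕ) (x G : ℕ → ℝ) : IsDualVector m x (alignedDual x G) :=
  fun i _ ↦ ⟨fun h ↦ if_pos h, fun _ ↦ abs_alignedDual_le_one x G i⟩

lemma injOn_finOfNat (n : ℕ) [NeZero n] : Set.InjOn (Fin.ofNat n) (Set.Iio n) := by
  intro i hi j hj hij
  simpa [Nat.mod_eq_of_lt hi, Nat.mod_eq_of_lt hj] using congrArg Fin.val hij

lemma sqDistSubdiff_le_sqDistBound (k : ℕ) (x : ℕ → ℝ) (t : ℝ) (g : Fin (k + 2) → ℝ) :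
    sqDistSubdiff (k + 2) x t g
      ≤ sqDistBound k t (alignedDual x (g ∘ Fin.ofNat (k + 2))) (g ∘ Fin.ofNat (k + 2)) := by
  set G : ℕ → ℝ := g ∘ Fin.ofNat (k + 2) with hG
  have hGg (l : Fin (k + 2)) : G l = g l := by simp [hG]
  calc sqDistSubdiff (k + 2) x t g
      ≤ ∑ l : Fin (k + 2),
          (g l - t * ∑ i ∈ Finset.range (k + 1), alignedDual x G i * diffMatrix i l) ^ 2 :=
        sqDistSubdiff_le (isDualVector_alignedDual _ x G) t g
    _ = ∑ l ∈ Finset.range (k + 2),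
          (G l - t * ∑ i ∈ Finset.range (k + 1), alignedDual x G i * diffMatrix i l) ^ 2 := by
        rw [← Fin.sum_univ_eq_sum_range]
        simp only [hGg]
    _ ≤ sqDistBound k t (alignedDual x G) G :=
        sum_sq_sub_le_sqDistBound (abs_alignedDual_le_one x G) k t G

end Subdifferential

section ProductMeasure

variable {ι : Type*} [Fintype ι] {μ : Measure ℝ} [IsProbabilityMeasure μ]

lemma integral_pi_comp_perm {α E : Type*} [MeasurableSpace α] [NormedAddCommGroup E]
    [NormedSpace ℝ E] (ν : Measure α) [SigmaFinite ν] (σ : Equiv.Perm ι) (F : (ι → α) → E) :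
    ∫ g, F (fun i ↦ g (σ i)) ∂(Measure.pi fun _ ↦ ν) = ∫ g, F g ∂(Measure.pi fun _ ↦ ν) := by
  rw [← (measurePreserving_piCongrLeft (fun _ : ι ↦ ν) σ.symm).integral_comp' (g := F)]
  congr with g
  congr with i
  simpa using
    (MeasurableEquiv.piCongrLeft_apply_apply (β := fun _ : ι ↦ α) σ.symm g (σ i)).symm

lemma map_eval_pair {α : Type*} [MeasurableSpace α] (ν : Measure α) [IsProbabilityMeasure ν]
    {i j : ι} (hij : i ≠ j) :
    (Measure.pi fun _ : ι ↦ ν).map (fun g ↦ (g i, g j)) = ν.prod ν := by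
  have indep : IndepFun (fun g : ι → α ↦ g i) (fun g ↦ g j) (Measure.pi fun _ : ι ↦ ν) :=
    (iIndepFun_pi (μ := fun _ : ι ↦ ν) (X := fun _ ↦ (id : α → α))
      fun _ ↦ aemeasurable_id).indepFun hij
  rw [indep.map_prod_eq_prod_map_map (measurable_pi_apply i).aemeasurable
      (measurable_pi_apply j).aemeasurable,
    (measurePreserving_eval (fun _ : ι ↦ ν) i).map_eq,
    (measurePreserving_eval (fun _ : ι ↦ ν) j).map_eq]

lemma integral_abs_eval_sub_eval {i j : ι} (hij : i ≠ j) :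
    ∫ g, |g i - g j| ∂(Measure.pi fun _ : ι ↦ μ) = ∫ p, |p.1 - p.2| ∂(μ.prod μ) := by
  rw [← map_eval_pair μ hij, integral_map (by fun_prop) (by fun_prop)]

lemma integral_eval_sq (i : ι) :
    ∫ g, g i ^ 2 ∂(Measure.pi fun _ : ι ↦ μ) = ∫ y, y ^ 2 ∂μ := by
  conv_rhs => rw [← (measurePreserving_eval (fun _ : ι ↦ μ) i).map_eq,
    integral_map (measurable_pi_apply i).aemeasurable (by fun_prop)]

lemma integral_odd_eval_sub_eval_eq_zero (i j : ι) {f : ℝ → ℝ} (hf : f.Odd) :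
    ∫ g, f (g i - g j) ∂(Measure.pi fun _ : ι ↦ μ) = 0 := by
  have swapped := integral_pi_comp_perm μ (Equiv.swap i j) fun g ↦ f (g i - g j)
  simp only [Equiv.swap_apply_left, Equiv.swap_apply_right] at swapped
  simp_rw [fun g : ι → ℝ ↦ show f (g j - g i) = -f (g i - g j) by rw [← hf, neg_sub],
    integral_neg] at swapped
  linarith

lemma integrable_realSign_mul_realSign (i j k l : ι) :
    Integrable (fun g : ι → ℝ ↦ Real.sign (g i - g j) * Real.sign (g k - g l))
      (Measure.pi fun _ : ι ↦ μ) :=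
  .of_bound ((measurable_realSign_eval_sub_eval i j).mul
      (measurable_realSign_eval_sub_eval k l)).aestronglyMeasurable 1
    (.of_forall fun _ ↦ abs_mul_le_one (abs_realSign_le_one _) (abs_realSign_le_one _))

lemma neg_third_le_integral_realSign_mul_realSign {i j k : ι} (hij : i ≠ j) (hjk : j ≠ k)
    (hik : i ≠ k) :
    -(1 / 3) ≤ ∫ g, Real.sign (g i - g j) * Real.sign (g j - g k) ∂(Measure.pi fun _ : ι ↦ μ) := by
  set σ : Equiv.Perm ι := Equiv.swap i j * Equiv.swap j k with hσ
  have hσi : σ i = j := by simp [hσ, Equiv.swap_apply_of_ne_of_ne hij hik]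
  have hσj : σ j = k := by simp [hσ, Equiv.swap_apply_of_ne_of_ne hik.symm hjk.symm]
  have hσk : σ k = i := by simp [hσ]
  have rotate₁ := integral_pi_comp_perm μ σ
    fun g ↦ Real.sign (g i - g j) * Real.sign (g j - g k)
  have rotate₂ := integral_pi_comp_perm μ σ
    fun g ↦ Real.sign (g j - g k) * Real.sign (g k - g i)
  simp only [hσi, hσj, hσk] at rotate₁ rotate₂
  have cyclic_sum := integral_mono (μ := Measure.pi fun _ : ι ↦ μ) (integrable_const (-1))
    (((integrable_realSign_mul_realSign i j j k).add
      (integrable_realSign_mul_realSign j k k i)).add (integrable_realSign_mul_realSign k i i j))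
    fun g ↦ neg_one_le_sum_realSign_cyclic (g i) (g j) (g k)
  rw [integral_add' ((integrable_realSign_mul_realSign _ _ _ _).add
      (integrable_realSign_mul_realSign _ _ _ _)) (integrable_realSign_mul_realSign _ _ _ _),
    integral_add' (integrable_realSign_mul_realSign _ _ _ _)
      (integrable_realSign_mul_realSign _ _ _ _)] at cyclic_sum
  simp only [integral_const, probReal_univ, one_smul] at cyclic_sum
  linarith

end ProductMeasure

section AlignedDual

variable {ι : Type*} [Fintype ι] {μ : Measure ℝ} [IsProbabilityMeasure μ]

lemma integrable_alignedDual_mul_diff (hμ : Integrable id μ) (x : ℕ → ℝ) (c : ℕ → ι) (i : ℕ) :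
    Integrable (fun g ↦ alignedDual x (g ∘ c) i * (g (c i) - g (c (i + 1))))
      (Measure.pi fun _ : ι ↦ μ) := by
  have eval (j : ι) : Integrable (fun g : ι → ℝ ↦ g j) (Measure.pi fun _ : ι ↦ μ) :=
    (measurePreserving_eval (fun _ : ι ↦ μ) j).integrable_comp_of_integrable hμ
  exact ((eval _).sub (eval _)).bdd_mul (c := 1) (measurable_alignedDual x c i).aestronglyMeasurable
    (.of_forall fun g ↦ abs_alignedDual_le_one x _ i)

lemma integrable_alignedDual_mul_alignedDual (x : ℕ → ℝ) (c : ℕ → ι) (i j : ℕ) :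
    Integrable (fun g ↦ alignedDual x (g ∘ c) i * alignedDual x (g ∘ c) j)
      (Measure.pi fun _ : ι ↦ μ) :=
  .of_bound ((measurable_alignedDual x c i).mul
      (measurable_alignedDual x c j)).aestronglyMeasurable 1
    (.of_forall fun _ ↦
      abs_mul_le_one (abs_alignedDual_le_one _ _ _) (abs_alignedDual_le_one _ _ _))

lemma integral_alignedDual_mul_diff (x : ℕ → ℝ) {c : ℕ → ι} {i : ℕ} (hc : c i ≠ c (i + 1)) :
    ∫ g, alignedDual x (g ∘ c) i * (g (c i) - g (c (i + 1))) ∂(Measure.pi fun _ : ι ↦ μ)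
      = (1 - jump x i) * ∫ p, |p.1 - p.2| ∂(μ.prod μ) := by
  by_cases h : x i - x (i + 1) ≠ 0
  · simp only [alignedDual, jump, if_pos h, integral_const_mul]
    rw [integral_odd_eval_sub_eval_eq_zero _ _ (f := fun r ↦ r) fun _ ↦ rfl]
    ring
  · simp only [alignedDual, jump, if_neg h, Function.comp_apply, realSign_mul_self,
      integral_abs_eval_sub_eval hc]
    ring

/- The left-hand factor is `3`, `1` or `0` according to whether both, none or one of the two indices
lie in the support; this form makes its sum over `i` computable from the variation of `jump x`. -/
lemma le_integral_alignedDual_mul_alignedDual_succ (x : ℕ → ℝ) {c : ℕ → ι} {i : ℕ}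
    (h₁ : c i ≠ c (i + 1)) (h₂ : c (i + 1) ≠ c (i + 2)) (h₃ : c i ≠ c (i + 2)) :
    -(1 / 3) * (1 + jump x i + jump x (i + 1) - 2 * dist (jump x i) (jump x (i + 1)))
      ≤ ∫ g, alignedDual x (g ∘ c) i * alignedDual x (g ∘ c) (i + 1)
          ∂(Measure.pi fun _ : ι ↦ μ) := by
  have realSign_odd : Real.sign.Odd := fun _ ↦ Real.sign_neg
  by_cases hi : x i - x (i + 1) ≠ 0 <;> by_cases hi' : x (i + 1) - x (i + 1 + 1) ≠ 0
  · have neg_one_le := (abs_le.1 (abs_mul_le_one (abs_realSign_le_one (x i - x (i + 1)))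
      (abs_realSign_le_one (x (i + 1) - x (i + 1 + 1))))).1
    simp only [alignedDual, jump, if_pos hi, if_pos hi', integral_const, probReal_univ, one_smul,
      dist_self]
    linarith
  · simp only [alignedDual, jump, if_pos hi, if_neg hi', integral_const_mul, Function.comp_apply,
      integral_odd_eval_sub_eval_eq_zero _ _ realSign_odd]
    norm_num
  · simp only [alignedDual, jump, if_neg hi, if_pos hi', integral_mul_const, Function.comp_apply,
      integral_odd_eval_sub_eval_eq_zero _ _ realSign_odd]
    norm_num
  · simp only [alignedDual, jump, if_neg hi, if_neg hi', Function.comp_apply, dist_self]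
    linarith [neg_third_le_integral_realSign_mul_realSign (μ := μ) h₁ h₂ h₃]

end AlignedDual

section ExpectedBound

variable {ι : Type*} [Fintype ι] {μ : Measure ℝ} [IsProbabilityMeasure μ]

lemma sum_integral_alignedDual_mul_diff (x : ℕ → ℝ) {c : ℕ → ι} {m : ℕ}
    (hc : Set.InjOn c (Set.Iic m)) :
    ∑ i ∈ Finset.range m,
        ∫ g, alignedDual x (g ∘ c) i * (g (c i) - g (c (i + 1))) ∂(Measure.pi fun _ : ι ↦ μ)
      = (m - ∑ i ∈ Finset.range m, jump x i) * ∫ p, |p.1 - p.2| ∂(μ.prod μ) := by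
  have term (i : ℕ) (hi : i ∈ Finset.range m) :=
    have hi := Finset.mem_range.1 hi
    integral_alignedDual_mul_diff (μ := μ) x (hc.ne hi.le (Nat.succ_le_of_lt hi) i.lt_succ_self.ne)
  rw [Finset.sum_congr rfl term, ← Finset.sum_mul, Finset.sum_sub_distrib]
  simp

lemma le_sum_integral_alignedDual_mul_alignedDual_succ {x : ℕ → ℝ} {c : ℕ → ι} {i j k : ℕ}
    (hc : Set.InjOn c (Set.Iic (k + 1))) (hi : i ≤ k) (hj : j ≤ k)
    (hxi : jump x i = 1) (hxj : jump x j = 0) :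
    -(1 / 3) * (k + 2 * ∑ l ∈ Finset.range (k + 1), jump x l - 3)
      ≤ ∑ l ∈ Finset.range k, ∫ g, alignedDual x (g ∘ c) l * alignedDual x (g ∘ c) (l + 1)
          ∂(Measure.pi fun _ : ι ↦ μ) := by
  have term (l : ℕ) (hl : l ∈ Finset.range k) := by
    have hl := Finset.mem_range.1 hl
    have hne {a b : ℕ} (ha : a ≤ k + 1) (hb : b ≤ k + 1) (hab : a ≠ b) : c a ≠ c b :=
      hc.ne ha hb hab
    exact le_integral_alignedDual_mul_alignedDual_succ (μ := μ) x
      (hne (a := l) (b := l + 1) (by omega) (by omega) (by omega))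
      (hne (a := l + 1) (b := l + 2) (by omega) (by omega) (by omega))
      (hne (a := l) (b := l + 2) (by omega) (by omega) (by omega))
  have total := Finset.sum_le_sum term
  rw [← Finset.mul_sum] at total
  linarith [sum_one_add_add_sub_variation_le (jump x) hi hj hxi hxj]

lemma integrable_eval_sq (hμ : MemLp id 2 μ) (i : ι) :
    Integrable (fun g ↦ g i ^ 2) (Measure.pi fun _ : ι ↦ μ) :=
  (hμ.comp_measurePreserving (measurePreserving_eval (fun _ : ι ↦ μ) i)).integrable_sq

lemma integrable_sum_eval_sq (hμ : MemLp id 2 μ) (c : ℕ → ι) (m : ℕ) :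
    Integrable (fun g ↦ ∑ l ∈ Finset.range m, (g ∘ c) l ^ 2) (Measure.pi fun _ : ι ↦ μ) :=
  integrable_finsetSum _ fun l _ ↦ integrable_eval_sq hμ (c l)

lemma integrable_sum_alignedDual_mul_diff (hμ : Integrable id μ) (x : ℕ → ℝ) (c : ℕ → ι) (m : ℕ) :
    Integrable (fun g ↦ ∑ i ∈ Finset.range m,
        alignedDual x (g ∘ c) i * ((g ∘ c) i - (g ∘ c) (i + 1))) (Measure.pi fun _ : ι ↦ μ) :=
  integrable_finsetSum _ fun i _ ↦ integrable_alignedDual_mul_diff hμ x c i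

lemma integrable_sum_alignedDual_mul_alignedDual_succ (x : ℕ → ℝ) (c : ℕ → ι) (m : ℕ) :
    Integrable (fun g ↦ ∑ i ∈ Finset.range m,
        alignedDual x (g ∘ c) i * alignedDual x (g ∘ c) (i + 1)) (Measure.pi fun _ : ι ↦ μ) :=
  integrable_finsetSum _ fun i _ ↦ integrable_alignedDual_mul_alignedDual x c i (i + 1)

lemma integrable_sqDistBound_alignedDual (hμ : MemLp id 2 μ) (x : ℕ → ℝ) (c : ℕ → ι) (k : ℕ)
    (t : ℝ) :
    Integrable (fun g ↦ sqDistBound k t (alignedDual x (g ∘ c)) (g ∘ c))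
      (Measure.pi fun _ : ι ↦ μ) :=
  ((integrable_sum_eval_sq hμ c (k + 2)).sub ((integrable_sum_alignedDual_mul_diff
      (hμ.integrable one_le_two) x c (k + 1)).const_mul (2 * t))).add
    (((integrable_const _).sub
      ((integrable_sum_alignedDual_mul_alignedDual_succ x c k).const_mul 2)).const_mul (t ^ 2))

lemma integral_sqDistBound_alignedDual (hμ : MemLp id 2 μ) (x : ℕ → ℝ) (c : ℕ → ι) (k : ℕ)
    (t : ℝ) :
    ∫ g, sqDistBound k t (alignedDual x (g ∘ c)) (g ∘ c) ∂(Measure.pi fun _ : ι ↦ μ)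
      = (k + 2) * ∫ y, y ^ 2 ∂μ
        - 2 * t * ∑ i ∈ Finset.range (k + 1),
            ∫ g, alignedDual x (g ∘ c) i * (g (c i) - g (c (i + 1))) ∂(Measure.pi fun _ : ι ↦ μ)
        + t ^ 2 * (2 * (k + 1) - 2 * ∑ i ∈ Finset.range k,
            ∫ g, alignedDual x (g ∘ c) i * alignedDual x (g ∘ c) (i + 1)
              ∂(Measure.pi fun _ : ι ↦ μ)) := by
  have sq := integrable_sum_eval_sq hμ c (k + 2)
  have lin := (integrable_sum_alignedDual_mul_diff (hμ.integrable one_le_two) x c (k + 1)).const_mul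
    (2 * t)
  have corr := (integrable_sum_alignedDual_mul_alignedDual_succ (μ := μ) x c k).const_mul 2
  have quad := ((integrable_const (2 * ((k : ℝ) + 1))).sub' corr).const_mul (t ^ 2)
  have sq_sum : ∫ g, ∑ l ∈ Finset.range (k + 2), (g ∘ c) l ^ 2 ∂(Measure.pi fun _ : ι ↦ μ)
      = (k + 2) * ∫ y, y ^ 2 ∂μ := by
    simp only [Function.comp_apply]
    rw [integral_finsetSum _ fun l _ ↦ integrable_eval_sq hμ (c l)]
    simp [integral_eval_sq]
  have lin_sum := integral_finsetSum (Finset.range (k + 1)) fun i _ ↦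
    integrable_alignedDual_mul_diff (hμ.integrable one_le_two) x c i
  have corr_sum := integral_finsetSum (Finset.range k) fun i _ ↦
    integrable_alignedDual_mul_alignedDual (μ := μ) x c i (i + 1)
  unfold sqDistBound
  rw [integral_add (sq.sub' lin) quad, integral_sub sq lin, integral_const_mul (2 * t),
    integral_const_mul (t ^ 2), integral_sub (integrable_const _) corr, integral_const,
    integral_const_mul 2, sq_sum, corr_sum]
  simp only [Function.comp_apply, lin_sum, probReal_univ, one_smul]

lemma integral_sqDistBound_alignedDual_le (hμ : MemLp id 2 μ) {x : ℕ → ℝ} {c : ℕ → ι} {k s : ℕ}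
    (hc : Set.InjOn c (Set.Iic (k + 1)))
    (hcard : ((Finset.range (k + 1)).filter fun i ↦ x i - x (i + 1) ≠ 0).card = s)
    (hs : 1 ≤ s) (hsk : s ≤ k) (t : ℝ) :
    ∫ g, sqDistBound k t (alignedDual x (g ∘ c)) (g ∘ c) ∂(Measure.pi fun _ : ι ↦ μ)
      ≤ (k + 2) * ∫ y, y ^ 2 ∂μ - 2 * t * ((k + 1 - s) * ∫ p, |p.1 - p.2| ∂(μ.prod μ))
        + t ^ 2 * (4 * (2 * k + s) / 3) := by
  obtain ⟨⟨i, hik, hxi⟩, j, hjk, hxj⟩ := exists_jump_eq_one_and_eq_zero hcard hs hsk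
  have corr := le_sum_integral_alignedDual_mul_alignedDual_succ (μ := μ) hc hik hjk hxi hxj
  rw [integral_sqDistBound_alignedDual hμ, sum_integral_alignedDual_mul_diff x hc]
  rw [sum_jump, hcard] at corr ⊢
  push_cast
  refine add_le_add_right (mul_le_mul_of_nonneg_left ?_ (sq_nonneg t)) _
  linarith

lemma integral_sqDistSubdiff_le (hμ : MemLp id 2 μ) {x : ℕ → ℝ} {k s : ℕ}
    (hcard : ((Finset.range (k + 1)).filter fun i ↦ x i - x (i + 1) ≠ 0).card = s)
    (hs : 1 ≤ s) (hsk : s ≤ k) (t : ℝ) :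
    ∫ g, sqDistSubdiff (k + 2) x t g ∂(Measure.pi fun _ : Fin (k + 2) ↦ μ)
      ≤ (k + 2) * ∫ y, y ^ 2 ∂μ - 2 * t * ((k + 1 - s) * ∫ p, |p.1 - p.2| ∂(μ.prod μ))
        + t ^ 2 * (4 * (2 * k + s) / 3) :=
  (integral_mono_of_nonneg (.of_forall (sqDistSubdiff_nonneg _ x t))
    (integrable_sqDistBound_alignedDual hμ x (Fin.ofNat (k + 2)) k t)
    (.of_forall (sqDistSubdiff_le_sqDistBound k x t))).trans
  (integral_sqDistBound_alignedDual_le hμ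
    ((injOn_finOfNat (k + 2)).mono fun _ ↦ Nat.lt_succ_of_le) hcard hs hsk t)

end ExpectedBound

section Gaussian

lemma integral_sq_gaussianReal (v : ℝ≥0) : ∫ y, y ^ 2 ∂(gaussianReal 0 v) = v := by
  rw [← variance_fun_id_gaussianReal (μ := 0) (v := v),
    variance_of_integral_eq_zero (by fun_prop) (by simp)]

lemma integral_abs_gaussianReal (v : ℝ≥0) : ∫ y, |y| ∂(gaussianReal 0 v) = √(2 * v / π) := by
  rcases eq_or_ne v 0 with rfl | hv
  · simp
  have density (y : ℝ) : gaussianPDFReal 0 v y • |y|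
      = (√(2 * π * v))⁻¹ * (|y| ^ (1 : ℝ) * rexp (-(1 / (2 * v)) * |y| ^ (2 : ℝ))) := by
    simp only [gaussianPDFReal, smul_eq_mul, Real.rpow_one, Real.rpow_two, sq_abs, sub_zero]
    rw [show -y ^ 2 / (2 * v) = -(1 / (2 * v)) * y ^ 2 by ring]
    ring
  have half_line :
      ∫ y in Set.Ioi (0 : ℝ), y ^ (1 : ℝ) * rexp (-(1 / (2 * v)) * y ^ (2 : ℝ)) = v := by
    rw [integral_rpow_mul_exp_neg_mul_rpow (by norm_num) (by norm_num) (by positivity)]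
    norm_num [Real.rpow_neg_one]
    field_simp
  rw [integral_gaussianReal_eq_integral_smul hv]
  simp_rw [density]
  rw [integral_const_mul,
    integral_comp_abs (f := fun y : ℝ ↦ y ^ (1 : ℝ) * rexp (-(1 / (2 * v)) * y ^ (2 : ℝ))),
    half_line]
  symm
  rw [Real.sqrt_eq_iff_mul_self_eq_of_pos (by positivity), ← sq, mul_pow, inv_pow,
    Real.sq_sqrt (by positivity)]
  field_simp

lemma map_sub_gaussianReal_prod (m₁ m₂ : ℝ) (v₁ v₂ : ℝ≥0) :
    ((gaussianReal m₁ v₁).prod (gaussianReal m₂ v₂)).map (fun p ↦ p.1 - p.2)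
      = gaussianReal (m₁ - m₂) (v₁ + v₂) := by
  have indep := indepFun_prod (μ := gaussianReal m₁ v₁) (ν := gaussianReal m₂ v₂)
    measurable_id measurable_neg
  have law_neg : ((gaussianReal m₁ v₁).prod (gaussianReal m₂ v₂)).map (fun p ↦ -p.2)
      = gaussianReal (-m₂) v₂ := by
    have neg_comp_snd := Measure.map_map (μ := (gaussianReal m₁ v₁).prod (gaussianReal m₂ v₂))
      measurable_neg measurable_snd
    rw [measurePreserving_snd.map_eq] at neg_comp_snd
    exact neg_comp_snd.symm.trans gaussianReal_map_neg
  have law_sub :=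
    gaussianReal_add_gaussianReal_of_indepFun indep measurePreserving_fst.map_eq law_neg
  simp only [sub_eq_add_neg]
  exact law_sub

lemma integral_abs_sub_gaussianReal (m : ℝ) (v : ℝ≥0) :
    ∫ p, |p.1 - p.2| ∂((gaussianReal m v).prod (gaussianReal m v)) = √(4 * v / π) := by
  have mean_abs := integral_abs_gaussianReal (v + v)
  rw [← sub_self m, ← map_sub_gaussianReal_prod, integral_map (by fun_prop) (by fun_prop)]
    at mean_abs
  rw [mean_abs]
  push_cast
  ring_nf

end Gaussian

end DiscreteTV

open DiscreteTV

theorem stmt13_general {n s : ℕ} (x : ℕ → ℝ)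
    (hcard : ((Finset.range (n - 1)).filter (fun i => x i - x (i + 1) ≠ 0)).card = s)
    (hs1 : 1 ≤ s) (hs2 : s ≤ n - 2)
    (μ : Measure ℝ) [IsProbabilityMeasure μ] (hμ : MemLp id 2 μ) :
    sInf {E : ℝ | ∃ t : ℝ, 0 ≤ t ∧
        E = ∫ g, sqDistSubdiff n x t g ∂(Measure.pi fun _ : Fin n ↦ μ)}
      ≤ n * ∫ y, y ^ 2 ∂μ
        - 3 * ((∫ p, |p.1 - p.2| ∂(μ.prod μ)) * (n - 1 - s)) ^ 2 / (4 * (2 * n + s - 4)) := by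
  obtain ⟨k, rfl⟩ : ∃ k, n = k + 2 := ⟨n - 2, by omega⟩
  set δ := ∫ p, |p.1 - p.2| ∂(μ.prod μ)
  have δ_nonneg : 0 ≤ δ := integral_nonneg fun p ↦ abs_nonneg _
  have hsk : (s : ℝ) ≤ k := by exact_mod_cast hs2
  -- the minimiser of the quadratic bound of `integral_sqDistSubdiff_le`
  set t := 3 * (δ * (k + 1 - s)) / (4 * (2 * k + s)) with ht
  have t_nonneg : 0 ≤ t :=
    div_nonneg (mul_nonneg (by norm_num) (mul_nonneg δ_nonneg (by linarith))) (by positivity)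
  have expectations_bddBelow : BddBelow {E : ℝ | ∃ t : ℝ, 0 ≤ t ∧
      E = ∫ g, sqDistSubdiff (k + 2) x t g ∂(Measure.pi fun _ : Fin (k + 2) ↦ μ)} := by
    refine ⟨0, ?_⟩
    rintro E ⟨t, -, rfl⟩
    exact integral_nonneg (sqDistSubdiff_nonneg _ x t)
  refine (csInf_le expectations_bddBelow ⟨t, t_nonneg, rfl⟩).trans
    ((integral_sqDistSubdiff_le hμ hcard hs1 hs2 t).trans_eq ?_)
  push_cast
  rw [show 2 * ((k : ℝ) + 2) + s - 4 = 2 * k + s by ring, ht]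
  field_simp
  ring

/-- For `x ∈ ℝⁿ` with gradient support of size `s`, `1 ≤ s ≤ n-2`, and standard Gaussian `g`,
`inf_{t ≥ 0} E[dist²(g, t ∂‖·‖_TV(x))] ≤ n - 3(n-1-s)²/(π(2n+s-4))`, where
`∂‖·‖_TV(x) = Ωᵀ ∂‖·‖₁(Ωx)` for the one-dimensional difference operator `Ω`. -/
theorem stmt13 (n s : ℕ) (hn : 3 ≤ n) (x : ℕ → ℝ)
    (ω : ℕ → ℕ → ℝ)
    (hω : ∀ i l, ω i l = if l = i then 1 else if l = i + 1 then -1 else 0)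
    (hcard : ((Finset.range (n - 1)).filter (fun i => x i - x (i + 1) ≠ 0)).card = s)
    (hs1 : 1 ≤ s) (hs2 : s ≤ n - 2) :
    sInf {E : ℝ | ∃ t : ℝ, 0 ≤ t ∧
        E = ∫ g : Fin n → ℝ,
          sInf {d : ℝ | ∃ z : ℕ → ℝ,
            (∀ i < n - 1,
              (x i - x (i + 1) ≠ 0 → z i = Real.sign (x i - x (i + 1))) ∧
              (x i - x (i + 1) = 0 → |z i| ≤ 1)) ∧
            d = ∑ l : Fin n,
              (g l - t * ∑ i ∈ Finset.range (n - 1), z i * ω i (l : ℕ)) ^ 2}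
          ∂(Measure.pi fun _ => gaussianReal 0 1)}
      ≤ (n : ℝ) - 3 * ((n : ℝ) - 1 - s) ^ 2 / (π * (2 * (n : ℝ) + s - 4)) := by
  obtain rfl : ω = diffMatrix := funext₂ hω
  refine (stmt13_general x hcard hs1 hs2 (gaussianReal 0 1) (memLp_id_gaussianReal 2)).trans_eq ?_
  rw [integral_sq_gaussianReal, integral_abs_sub_gaussianReal, mul_pow, sq_sqrt (by positivity)]
  push_cast
  field_simp
end
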